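/- Let n ≥ 3 be odd and let m_1, m_2 be positive integers with m_1 < F_{n-1} and m_2 < F_{n-1}. Set c_1 = F_{n+1} m_1 + F_n m_2 and c_2 = F_n m_1 + F_{n-1} m_2. Then for an integer h, we have c_2 + h > 0 and the ratio c_1/(c_2 + h) lies in the open interval (F_{n+1}/F_n, F_n/F_{n-1}) if and only if h = 0. -/

import Mathlib

/-!
Write `a = F_{n+1}`, `b = F_n`, `d = F_{n-1}`. For odd `n`, Cassini's identity reads
`b ^ 2 = a * d + 1`. Clearing the positive denominators, it turns the lower bound
`a / b < c₁ / (c₂ + h)` into `a * h < m₂`, and the upper bound `c₁ / (c₂ + h) < b / d` into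
`0 < m₁ + b * h`. Since `0 < m₂ < a` and `0 < m₁ < b`, the first holds exactly when `h ≤ 0` and the
second exactly when `0 ≤ h`.
-/

/-- Cassini's identity at odd indices, over the integers. -/
theorem fib_cassini_odd (k : ℕ) :
    (Nat.fib (2 * k + 1) : ℤ) ^ 2 = Nat.fib (2 * k + 2) * Nat.fib (2 * k) + 1 := by
  induction k with
  | zero => simp
  | succ k ih =>
    have h2 : (Nat.fib (2 * k + 2) : ℤ) = Nat.fib (2 * k) + Nat.fib (2 * k + 1) := by
      exact_mod_cast Nat.fib_add_two
    have h3 : (Nat.fib (2 * k + 3) : ℤ) = Nat.fib (2 * k + 1) + Nat.fib (2 * k + 2) := by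
      exact_mod_cast Nat.fib_add_two
    have h4 : (Nat.fib (2 * k + 4) : ℤ) = Nat.fib (2 * k + 2) + Nat.fib (2 * k + 3) := by
      exact_mod_cast Nat.fib_add_two
    rw [show 2 * (k + 1) + 1 = 2 * k + 3 by ring, show 2 * (k + 1) + 2 = 2 * k + 4 by ring,
      show 2 * (k + 1) = 2 * k + 2 by ring, h4, h3, h2]
    rw [h2] at ih
    linear_combination ih

theorem stmt_7 (n : ℕ) (hn : 3 ≤ n) (hodd : Odd n)
    (m₁ m₂ : ℤ) (hm₁ : 0 < m₁) (hm₂ : 0 < m₂)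
    (hm₁' : m₁ < (Nat.fib (n - 1) : ℤ)) (hm₂' : m₂ < (Nat.fib (n - 1) : ℤ))
    (c₁ c₂ : ℤ)
    (hc₁ : c₁ = (Nat.fib (n + 1) : ℤ) * m₁ + (Nat.fib n : ℤ) * m₂)
    (hc₂ : c₂ = (Nat.fib n : ℤ) * m₁ + (Nat.fib (n - 1) : ℤ) * m₂)
    (h : ℤ) :
    (0 < c₂ + h ∧
     (c₁ : ℝ) / ((c₂ : ℝ) + (h : ℝ)) ∈
       Set.Ioo ((Nat.fib (n + 1) : ℝ) / (Nat.fib n : ℝ))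
               ((Nat.fib n : ℝ) / (Nat.fib (n - 1) : ℝ))) ↔ h = 0 := by
  obtain ⟨k, rfl⟩ := hodd
  have cas := fib_cassini_odd k
  have hdb : Nat.fib (2 * k) ≤ Nat.fib (2 * k + 1) := Nat.fib_mono (by omega)
  have hba : Nat.fib (2 * k + 1) ≤ Nat.fib (2 * k + 1 + 1) := Nat.fib_mono (by omega)
  simp only [Nat.add_sub_cancel] at *
  rw [show 2 * k + 2 = 2 * k + 1 + 1 by ring] at cas
  generalize Nat.fib (2 * k + 1 + 1) = a at *
  generalize Nat.fib (2 * k + 1) = b at *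
  generalize Nat.fib (2 * k) = d at *
  have hdZ : (0 : ℤ) < d := by omega
  have hbZ : (0 : ℤ) < b := by omega
  have haZ : (0 : ℤ) < a := by omega
  have hbR : (0 : ℝ) < b := by exact_mod_cast hbZ
  have hdR : (0 : ℝ) < d := by exact_mod_cast hdZ
  have key : 0 < c₂ + h → ((c₁ : ℝ) / ((c₂ : ℝ) + (h : ℝ)) ∈
      Set.Ioo ((a : ℝ) / (b : ℝ)) ((b : ℝ) / (d : ℝ)) ↔ a * h < m₂ ∧ 0 < m₁ + b * h) := by
    intro hpos
    have hposR : (0 : ℝ) < (c₂ : ℝ) + h := by exact_mod_cast hpos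
    rw [Set.mem_Ioo, div_lt_div_iff₀ hbR hposR, div_lt_div_iff₀ hposR hdR]
    have e₁ : c₁ * b - a * (c₂ + h) = m₂ - a * h := by
      rw [hc₁, hc₂]; linear_combination m₂ * cas
    have e₂ : b * (c₂ + h) - c₁ * d = m₁ + b * h := by
      rw [hc₁, hc₂]; linear_combination m₁ * cas
    norm_cast
    constructor <;> rintro ⟨h₁, h₂⟩ <;> constructor <;> linarith
  constructor
  · rintro ⟨hpos, hmem⟩
    obtain ⟨h₁, h₂⟩ := (key hpos).1 hmem
    have hle : h < 1 := by
      by_contra! hh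
      nlinarith
    have hge : -1 < h := by
      by_contra! hh
      nlinarith
    omega
  · rintro rfl
    have hpos : 0 < c₂ + 0 := by rw [hc₂]; positivity
    exact ⟨hpos, (key hpos).2 (by simpa using ⟨hm₂, hm₁⟩)⟩
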